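/- arXiv:1804.11345 — 2 statements merged into one kernel-verified Lean document; each statement's English description precedes it below -/
import Mathlib

section
/- Let n, t be integers with 2 ≤ t ≤ n−1. Suppose φ: 𝒢_n → 𝒢_n is a complete linear map satisfying: for all G ∈ 𝒢_n, α(φ(G)) = t if and only if α(G) = t. Then for any pairwise distinct i,j,k ∈ {1,...,n}, the edge set of φ(G_{ij}) ∪ φ(G_{ik}) consists of exactly two adjacent edges, i.e., two distinct edges that share a common vertex. -/
/-- The independence number of a simple graph: the maximum cardinality of a set
of pairwise nonadjacent vertices. -/
noncomputable def indepNum {V : Type*} (G : SimpleGraph V) : ℕ :=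
  sSup {k | ∃ s : Finset V, (∀ a ∈ s, ∀ b ∈ s, a ≠ b → ¬ G.Adj a b) ∧ s.card = k}

/-- `G_{ij}`: the graph whose only edge is `(i, j)`. -/
def singleEdge {V : Type*} (i j : V) : SimpleGraph V :=
  SimpleGraph.fromEdgeSet {s(i, j)}

/-- A map on graphs is linear if it preserves unions. -/
def IsLinearMap' {V : Type*} (φ : SimpleGraph V → SimpleGraph V) : Prop :=
  ∀ G H : SimpleGraph V, φ (G ⊔ H) = φ G ⊔ φ H

/-- A complete linear map: a linear map sending the complete graph to itself. -/
def IsCompleteLinearMap {V : Type*} (φ : SimpleGraph V → SimpleGraph V) : Prop :=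
  IsLinearMap' φ ∧ φ ⊤ = ⊤

/-- A vertex permutation. -/
def IsVertexPermutation {V : Type*} (φ : SimpleGraph V → SimpleGraph V) : Prop :=
  ∃ σ : Equiv.Perm V, ∀ i j : V, i ≠ j → φ (singleEdge i j) = singleEdge (σ i) (σ j)

/-- An edge permutation. -/
def IsEdgePermutation {V : Type*} (φ : SimpleGraph V → SimpleGraph V) : Prop :=
  φ ⊤ = ⊤ ∧ ∀ i j : V, i ≠ j → ((φ (singleEdge i j)).edgeSet).ncard = 1

/-- `G` has an independent set of size `m`. -/
def HasInd {V : Type*} (G : SimpleGraph V) (m : ℕ) : Prop :=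
  ∃ s : Finset V, (∀ a ∈ s, ∀ b ∈ s, a ≠ b → ¬ G.Adj a b) ∧ s.card = m

theorem HasInd.mono {V : Type*} {G H : SimpleGraph V} {m : ℕ} (h : HasInd H m) (hle : G ≤ H) :
    HasInd G m := by
  obtain ⟨s, hs, hc⟩ := h
  exact ⟨s, fun a ha b hb hab h => hs a ha b hb hab (hle h), hc⟩

theorem HasInd.le {V : Type*} {G : SimpleGraph V} {m k : ℕ} (h : HasInd G m) (hle : k ≤ m) :
    HasInd G k := by
  obtain ⟨s, hs, hc⟩ := h
  obtain ⟨u, hu, huc⟩ := Finset.exists_subset_card_eq (hc ▸ hle : k ≤ s.card)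
  exact ⟨u, fun a ha b hb => hs a (hu ha) b (hu hb), huc⟩

theorem le_indepNum_iff {V : Type*} [Fintype V] (G : SimpleGraph V) (m : ℕ) :
    m ≤ indepNum G ↔ HasInd G m := by
  have hb : BddAbove {k | ∃ s : Finset V,
      (∀ a ∈ s, ∀ b ∈ s, a ≠ b → ¬ G.Adj a b) ∧ s.card = k} := by
    refine ⟨Fintype.card V, ?_⟩
    rintro k ⟨s, -, rfl⟩
    exact Finset.card_le_univ s
  constructor
  · intro h
    have hmem := Nat.sSup_mem (s := {k | ∃ s : Finset V,
      (∀ a ∈ s, ∀ b ∈ s, a ≠ b → ¬ G.Adj a b) ∧ s.card = k}) ⟨0, ∅, by simp, rfl⟩ hb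
    exact HasInd.le hmem h
  · intro h
    exact le_csSup hb h

/-- complement of the clique on `T` -/
def coClique {V : Type*} (T : Finset V) : SimpleGraph V where
  Adj a b := a ≠ b ∧ ¬ (a ∈ T ∧ b ∈ T)
  symm := ⟨fun _ _ h => ⟨h.1.symm, fun h' => h.2 h'.symm⟩⟩
  loopless := ⟨fun _ h => h.1 rfl⟩

theorem coClique_hasInd {V : Type*} (T : Finset V) : HasInd (coClique T) T.card :=
  ⟨T, fun _ ha _ hb _ h => h.2 ⟨ha, hb⟩, rfl⟩

theorem coClique_indepNum {V : Type*} [Fintype V] (T : Finset V) (hT : 1 ≤ T.card) :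
    indepNum (coClique T) = T.card := by
  refine le_antisymm ?_ ((le_indepNum_iff _ _).2 (coClique_hasInd T))
  by_contra hlt
  push Not at hlt
  obtain ⟨s, hs, hc⟩ := (le_indepNum_iff _ _).1 (Nat.succ_le_of_lt hlt)
  have hsT : s ⊆ T := by
    intro a ha
    by_contra haT
    obtain ⟨b, hb, hba⟩ := Finset.exists_mem_ne (by omega : 1 < s.card) a
    exact hs a ha b hb hba.symm ⟨hba.symm, fun h => haT h.1⟩
  have := Finset.card_le_card hsT
  omega

theorem HasInd.exists_coClique {V : Type*} {G : SimpleGraph V} {m : ℕ} (h : HasInd G m) :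
    ∃ T : Finset V, T.card = m ∧ G ≤ coClique T := by
  obtain ⟨s, hs, hc⟩ := h
  exact ⟨s, hc, fun a b hab => ⟨hab.ne, fun h => hs a h.1 b h.2 hab.ne hab⟩⟩

theorem exists_sub_indepNum_eq {n t : ℕ} (htn : t ≤ n) (G : SimpleGraph (Fin n))
    (hG : indepNum G ≤ t) : ∃ H ≤ G, indepNum H = t := by
  classical
  have hfin : ({H : SimpleGraph (Fin n) | H ≤ G ∧ t ≤ indepNum H}).Finite := Set.toFinite _
  have hne : ({H : SimpleGraph (Fin n) | H ≤ G ∧ t ≤ indepNum H}).Nonempty := by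
    refine ⟨⊥, bot_le, (le_indepNum_iff _ _).2 ?_⟩
    refine HasInd.le (m := n) ⟨Finset.univ, by simp, by simp⟩ htn
  obtain ⟨H, hH⟩ := hfin.exists_maximal hne
  refine ⟨H, hH.prop.1, ?_⟩
  by_contra hne'
  have hlt : t + 1 ≤ indepNum H := by have := hH.prop.2; omega
  have hHG : H ≠ G := by rintro rfl; omega
  have : ∃ x y, G.Adj x y ∧ ¬ H.Adj x y := by
    by_contra hcon
    push Not at hcon
    exact hHG (le_antisymm hH.prop.1 (fun a b h => hcon a b h))
  obtain ⟨x, y, hxy, hnxy⟩ := this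
  obtain ⟨s, hs, hc⟩ := (le_indepNum_iff _ _).1 hlt
  have hmem : H ⊔ singleEdge x y ∈ {H : SimpleGraph (Fin n) | H ≤ G ∧ t ≤ indepNum H} := by
    refine ⟨sup_le hH.prop.1 ?_, (le_indepNum_iff _ _).2 ?_⟩
    · intro a b hab
      simp only [singleEdge, SimpleGraph.fromEdgeSet_adj, Set.mem_singleton_iff, Sym2.eq_iff] at hab
      rcases hab.1 with ⟨rfl, rfl⟩ | ⟨rfl, rfl⟩
      · exact hxy
      · exact hxy.symm
    · refine HasInd.le (m := (s.erase x).card) ⟨s.erase x, ?_, rfl⟩ ?_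
      · intro a ha b hb hab h
        rw [Finset.mem_erase] at ha hb
        rcases h with h | h
        · exact hs a ha.2 b hb.2 hab h
        · simp only [singleEdge, SimpleGraph.fromEdgeSet_adj, Set.mem_singleton_iff,
            Sym2.eq_iff] at h
          rcases h.1 with ⟨h1, -⟩ | ⟨-, h1⟩
          · exact ha.1 h1
          · exact hb.1 h1
      · have := Finset.pred_card_le_card_erase (s := s) (a := x)
        omega
  have hle := hH.le_of_ge hmem le_sup_left
  refine hnxy (hle (Or.inr ?_))
  simp [singleEdge, hxy.ne]

theorem phi_mono {V : Type*} {φ : SimpleGraph V → SimpleGraph V} (h : IsLinearMap' φ) :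
    Monotone φ := by
  intro G H hle
  have := h G H
  rw [sup_eq_right.2 hle] at this
  rw [this]; exact le_sup_left

theorem pres_iff {n t : ℕ} (ht : 2 ≤ t) (htn : t ≤ n - 1)
    {φ : SimpleGraph (Fin n) → SimpleGraph (Fin n)} (hφ : IsCompleteLinearMap φ)
    (hpres : ∀ G : SimpleGraph (Fin n), indepNum (φ G) = t ↔ indepNum G = t)
    (m : ℕ) (hm : m = t ∨ m = t + 1) (G : SimpleGraph (Fin n)) :
    HasInd (φ G) m ↔ HasInd G m := by
  have hmono := phi_mono hφ.1
  have h1 : t ≤ indepNum G → t ≤ indepNum (φ G) := by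
    intro h
    obtain ⟨T, hT, hle⟩ := ((le_indepNum_iff _ _).1 h).exists_coClique
    have h2 := (hpres (coClique T)).2 (hT ▸ coClique_indepNum T (by omega))
    exact (le_indepNum_iff _ _).2 (HasInd.mono ((le_indepNum_iff _ _).1 h2.ge) (hmono hle))
  have h2 : indepNum G ≤ t → indepNum (φ G) ≤ t := by
    intro h
    obtain ⟨H, hle, hH⟩ := exists_sub_indepNum_eq (by omega) G h
    have h3 := (hpres H).2 hH
    rw [← h3]
    exact (le_indepNum_iff _ _).2 (((le_indepNum_iff _ _).1 le_rfl).mono (hmono hle))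
  have h3 := hpres G
  rw [← le_indepNum_iff, ← le_indepNum_iff]
  omega

/-- `f` is an edge of the image of the single edge `e` -/
def ERel {V : Type*} (φ : SimpleGraph V → SimpleGraph V) (e f : Sym2 V) : Prop :=
  f ∈ (φ (SimpleGraph.fromEdgeSet {e})).edgeSet

/-- edges inside `T` -/
def EIn {V : Type*} (T : Finset V) (e : Sym2 V) : Prop := ¬ e.IsDiag ∧ ∀ v ∈ e, v ∈ T

theorem exists_erel {V : Type*} [Finite V] {φ : SimpleGraph V → SimpleGraph V}
    (h : IsLinearMap' φ) (s : Set (Sym2 V)) (f : Sym2 V)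
    (hf : f ∈ (φ (SimpleGraph.fromEdgeSet s)).edgeSet) :
    f ∈ (φ ⊥).edgeSet ∨ ∃ e ∈ s, ERel φ e f := by
  induction s, Set.toFinite s using Set.Finite.induction_on with
  | empty => left; simpa using hf
  | @insert a s _ _ ih =>
    rw [Set.insert_eq, SimpleGraph.fromEdgeSet_union, h, SimpleGraph.edgeSet_sup] at hf
    rcases hf with hf | hf
    · exact Or.inr ⟨a, Set.mem_insert _ _, hf⟩
    · rcases ih hf with h | ⟨e, he, h⟩
      · exact Or.inl h
      · exact Or.inr ⟨e, Set.mem_insert_of_mem _ he, h⟩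

theorem bot_erel {V : Type*} {φ : SimpleGraph V → SimpleGraph V}
    (h : IsLinearMap' φ) {f : Sym2 V} (hf : f ∈ (φ ⊥).edgeSet) (e : Sym2 V) : ERel φ e f :=
  SimpleGraph.edgeSet_mono (phi_mono h bot_le) hf

theorem exists_erel_top {V : Type*} [Finite V] [Nontrivial V] {φ : SimpleGraph V → SimpleGraph V}
    (h : IsCompleteLinearMap φ) (f : Sym2 V) (hf : ¬ f.IsDiag) :
    ∃ e, ¬ e.IsDiag ∧ ERel φ e f := by
  have := exists_erel h.1 {e | ¬ e.IsDiag} f (by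
    have : SimpleGraph.fromEdgeSet {e : Sym2 V | ¬ e.IsDiag} = ⊤ := by
      ext a b; simp
    rw [this, h.2]; simpa using hf)
  rcases this with hb | ⟨e, he, h'⟩
  · obtain ⟨x, y, hxy⟩ := exists_pair_ne V
    exact ⟨s(x, y), by simpa using hxy, bot_erel h.1 hb _⟩
  · exact ⟨e, he, h'⟩

theorem theta1 {n m : ℕ} {φ : SimpleGraph (Fin n) → SimpleGraph (Fin n)} (hφ : IsLinearMap' φ)
    (hp : ∀ G, HasInd G m → HasInd (φ G) m) (T : Finset (Fin n)) (hT : T.card = m) :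
    ∃ T' : Finset (Fin n), T'.card = m ∧ ∀ e f, ¬ e.IsDiag → ERel φ e f → EIn T' f → EIn T e := by
  obtain ⟨T', hs, hc⟩ := hp _ (hT ▸ coClique_hasInd T)
  refine ⟨T', hc, fun e f he hef hf => ⟨he, ?_⟩⟩
  by_contra hcon
  have hle : SimpleGraph.fromEdgeSet {e} ≤ coClique T := by
    intro a b hab
    simp only [SimpleGraph.fromEdgeSet_adj, Set.mem_singleton_iff] at hab
    refine ⟨hab.2, fun h => hcon ?_⟩
    rw [← hab.1]
    intro v hv
    rcases Sym2.mem_iff.1 hv with rfl | rfl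
    exacts [h.1, h.2]
  have h2 := SimpleGraph.edgeSet_mono (phi_mono hφ hle) hef
  induction f with | _ a b =>
  exact hs a (hf.2 a (by simp)) b (hf.2 b (by simp)) (by simpa using hf.1) h2

theorem theta2 {n m : ℕ} (hm : m ≤ n) {φ : SimpleGraph (Fin n) → SimpleGraph (Fin n)}
    (hφ : IsLinearMap' φ)
    (hp : ∀ G, HasInd (φ G) m → HasInd G m) (T' : Finset (Fin n)) (hT : T'.card = m) :
    ∃ T : Finset (Fin n), T.card = m ∧ ∀ e, EIn T e → ∃ f, EIn T' f ∧ ERel φ e f := by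
  by_cases hb : ∃ f, EIn T' f ∧ f ∈ (φ ⊥).edgeSet
  · obtain ⟨f, hf, hfb⟩ := hb
    exact ⟨T', hT, fun e _ => ⟨f, hf, bot_erel hφ hfb e⟩⟩
  · obtain ⟨T, hs, hc⟩ := hp (SimpleGraph.fromEdgeSet {e | ∀ f, EIn T' f → ¬ ERel φ e f}) (by
      refine ⟨T', fun a ha b hb' hab hadj => ?_, hT⟩
      have hE : EIn T' s(a, b) := by
        refine ⟨by simpa using hab, fun v hv => ?_⟩
        rcases Sym2.mem_iff.1 hv with rfl | rfl <;> assumption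
      rcases exists_erel hφ _ s(a, b) hadj with h | ⟨e, he, h⟩
      · exact hb ⟨_, hE, h⟩
      · exact he _ hE h)
    refine ⟨T, hc, fun e he => ?_⟩
    by_contra hcon
    push Not at hcon
    induction e with | _ a b =>
    have hab : a ≠ b := by simpa using he.1
    exact hs a (he.2 a (by simp)) b (he.2 b (by simp)) hab (by
      rw [SimpleGraph.fromEdgeSet_adj]; exact ⟨hcon, hab⟩)

theorem EIn.mk {V : Type*} {T : Finset V} {a b : V} (hab : a ≠ b) (ha : a ∈ T) (hb : b ∈ T) :
    EIn T s(a, b) := by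
  refine ⟨by simpa using hab, fun v hv => ?_⟩
  rcases Sym2.mem_iff.1 hv with rfl | rfl <;> assumption

theorem subset_of_EIn {V : Type*} {S T : Finset V} (hS : 2 ≤ S.card)
    (h : ∀ e, EIn S e → EIn T e) : S ⊆ T := by
  intro a ha
  obtain ⟨b, hb, hba⟩ := Finset.exists_mem_ne (by omega : 1 < S.card) a
  exact (h _ (EIn.mk hba.symm ha hb)).2 a (by simp)

/-- The preimage of the second clique is the first clique. -/
def Pre {V : Type*} (φ : SimpleGraph V → SimpleGraph V) (T T' : Finset V) : Prop :=
  ∀ e, ¬ e.IsDiag → ((∃ f, EIn T' f ∧ ERel φ e f) ↔ EIn T e)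

theorem Pre.unique {V : Type*} {φ : SimpleGraph V → SimpleGraph V} {S T T' : Finset V}
    (h1 : Pre φ S T') (h2 : Pre φ T T') (hc : 2 ≤ S.card) : S ⊆ T :=
  subset_of_EIn hc fun e he => (h2 e he.1).1 ((h1 e he.1).2 he)

theorem exists_theta {n m : ℕ} (hm : m ≤ n) (hm2 : 2 ≤ m)
    {φ : SimpleGraph (Fin n) → SimpleGraph (Fin n)}
    (hφ : IsLinearMap' φ) (hp : ∀ G, HasInd (φ G) m ↔ HasInd G m) :
    ∃ θ : Finset (Fin n) → Finset (Fin n),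
      (∀ T, T.card = m → (θ T).card = m ∧ Pre φ T (θ T)) ∧
      ∀ T', T'.card = m → ∃ T, T.card = m ∧ θ T = T' := by
  have key : ∀ T : Finset (Fin n), ∃ T' : Finset (Fin n), T.card = m →
      T'.card = m ∧ Pre φ T T' := by
    intro T
    by_cases hT : T.card = m
    swap
    · exact ⟨∅, fun h => absurd h hT⟩
    obtain ⟨T', hc, h1⟩ := theta1 hφ (fun G => (hp G).2) T hT
    obtain ⟨U, hUc, h2⟩ := theta2 hm hφ (fun G => (hp G).1) T' hc
    have hUT : U ⊆ T := subset_of_EIn (by omega) fun e he => by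
      obtain ⟨f, hf, hef⟩ := h2 e he
      exact h1 e f he.1 hef hf
    have : U = T := Finset.eq_of_subset_of_card_le hUT (by omega)
    subst this
    exact ⟨T', fun _ => ⟨hc, fun e he => ⟨fun ⟨f, hf, hef⟩ => h1 e f he hef hf, h2 e⟩⟩⟩
  choose θ hθ using key
  refine ⟨θ, hθ, ?_⟩
  have hinj : Set.InjOn θ (Finset.powersetCard m (Finset.univ : Finset (Fin n))) := by
    intro S hS T hT hST
    simp only [Finset.mem_coe, Finset.mem_powersetCard, Finset.subset_univ,
      true_and] at hS hT
    have h1 := (hθ S hS).2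
    have h2 := (hθ T hT).2
    rw [hST] at h1
    exact Finset.Subset.antisymm (h1.unique h2 (by omega)) (h2.unique h1 (by omega))
  intro T' hT'
  have hmaps : ∀ S ∈ Finset.powersetCard m (Finset.univ : Finset (Fin n)),
      θ S ∈ Finset.powersetCard m (Finset.univ : Finset (Fin n)) := by
    intro S hS
    simp only [Finset.mem_powersetCard, Finset.subset_univ, true_and] at hS ⊢
    exact (hθ S hS).1
  obtain ⟨T, hT, h⟩ := Finset.surj_on_of_inj_on_of_card_le (fun S _ => θ S) hmaps
    (fun S T hS hT h => hinj hS hT h) le_rfl T' (by simpa using hT')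
  exact ⟨T, by simpa using hT, h.symm⟩

/-- Local structure: on sets of size t+1, preimages are given by a bijection of vertices. -/
theorem exists_rho {n t : ℕ} (ht : 2 ≤ t) (htn : t + 1 ≤ n)
    {φ : SimpleGraph (Fin n) → SimpleGraph (Fin n)} (hφ : IsCompleteLinearMap φ)
    {θ : Finset (Fin n) → Finset (Fin n)}
    (hθ : ∀ T, T.card = t → (θ T).card = t ∧ Pre φ T (θ T))
    (hs : ∀ T', T'.card = t → ∃ T, T.card = t ∧ θ T = T')
    (S S' : Finset (Fin n)) (hS : S.card = t + 1) (hS' : S'.card = t + 1) (hP : Pre φ S S') :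
    ∃ ρ : Fin n → Fin n, Set.InjOn ρ S' ∧ (∀ a ∈ S', ρ a ∈ S) ∧
      ∀ a ∈ S', ∀ b ∈ S', a ≠ b → ∀ e, ¬ e.IsDiag → (ERel φ e s(a, b) ↔ e = s(ρ a, ρ b)) := by
  classical
  have : Nontrivial (Fin n) := Fin.nontrivial_iff_two_le.2 (by omega)
  have key : ∀ a : Fin n, ∃ r : Fin n, a ∈ S' → r ∈ S ∧ θ (S.erase r) = S'.erase a := by
    intro a
    by_cases ha : a ∈ S'
    swap
    · exact ⟨a, fun h => absurd h ha⟩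
    obtain ⟨T, hT, hTe⟩ := hs (S'.erase a) (by rw [Finset.card_erase_of_mem ha]; omega)
    have hPT := (hθ T hT).2
    have hTS : T ⊆ S := subset_of_EIn (by omega) fun e he => by
      obtain ⟨f, hf, hef⟩ := (hPT e he.1).2 he
      rw [hTe] at hf
      exact (hP e he.1).1 ⟨f, ⟨hf.1, fun v hv => Finset.mem_of_mem_erase (hf.2 v hv)⟩, hef⟩
    obtain ⟨r, hr, hrT⟩ := Finset.exists_mem_notMem_of_card_lt_card (by omega : T.card < S.card)
    refine ⟨r, fun _ => ⟨hr, ?_⟩⟩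
    have : T = S.erase r := by
      apply Finset.eq_of_subset_of_card_le
      · intro x hx
        exact Finset.mem_erase.2 ⟨fun h => hrT (h ▸ hx), hTS hx⟩
      · rw [Finset.card_erase_of_mem hr]; omega
    rw [← this, hTe]
  choose ρ hρ using key
  have hinj : Set.InjOn ρ S' := by
    intro a ha b hb hab
    have h1 := (hρ a ha).2
    have h2 := (hρ b hb).2
    rw [hab, h2] at h1
    by_contra hne
    have : a ∈ S'.erase b := Finset.mem_erase.2 ⟨hne, ha⟩
    rw [h1] at this
    simp at this
  have himg : S'.image ρ = S := by
    apply Finset.eq_of_subset_of_card_le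
    · intro x hx
      obtain ⟨a, ha, rfl⟩ := Finset.mem_image.1 hx
      exact (hρ a ha).1
    · rw [Finset.card_image_of_injOn hinj]; omega
  refine ⟨ρ, hinj, fun a ha => (hρ a ha).1, ?_⟩
  intro a ha b hb hab
  have hfwd : ∀ e, ¬ e.IsDiag → ERel φ e s(a, b) → e = s(ρ a, ρ b) := by
    intro e he hef
    have heS := (hP e he).1 ⟨_, EIn.mk hab ha hb, hef⟩
    have hmem : ∀ v ∈ e, v = ρ a ∨ v = ρ b := by
      intro v hv
      have hvS := heS.2 v hv
      rw [← himg] at hvS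
      obtain ⟨c, hc, rfl⟩ := Finset.mem_image.1 hvS
      by_contra hcon
      push Not at hcon
      have hca : a ≠ c := fun h => hcon.1 (by rw [h])
      have hcb : b ≠ c := fun h => hcon.2 (by rw [h])
      obtain ⟨hr, hre⟩ := hρ c hc
      have hPT := (hθ (S.erase (ρ c)) (by rw [Finset.card_erase_of_mem hr]; omega)).2
      rw [hre] at hPT
      have := (hPT e he).1 ⟨_, EIn.mk hab (Finset.mem_erase.2 ⟨hca, ha⟩)
        (Finset.mem_erase.2 ⟨hcb, hb⟩), hef⟩
      simpa using this.2 _ hv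
    induction e with | _ x y =>
    have hxy : x ≠ y := by simpa using he
    have hx := hmem x (by simp)
    have hy := hmem y (by simp)
    rw [Sym2.eq_iff]
    grind
  intro e he
  refine ⟨hfwd e he, ?_⟩
  rintro rfl
  obtain ⟨e', he', h'⟩ := exists_erel_top hφ s(a, b) (by simpa using hab)
  rwa [hfwd e' he' h'] at h'

theorem stmt10 (n t : ℕ) (ht : 2 ≤ t) (htn : t ≤ n - 1)
    (φ : SimpleGraph (Fin n) → SimpleGraph (Fin n)) (hφ : IsCompleteLinearMap φ)
    (hpres : ∀ G : SimpleGraph (Fin n), indepNum (φ G) = t ↔ indepNum G = t) :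
    ∀ i j k : Fin n, i ≠ j → i ≠ k → j ≠ k →
      ∃ e f : Sym2 (Fin n), e ≠ f ∧ (∃ v : Fin n, v ∈ e ∧ v ∈ f) ∧
        (φ (singleEdge i j) ⊔ φ (singleEdge i k)).edgeSet = {e, f} := by
  intro i j k hij hik hjk
  classical
  have htn1 : t + 1 ≤ n := by omega
  obtain ⟨θ, hθ, hs⟩ := exists_theta (by omega : t ≤ n) ht hφ.1
    (pres_iff ht htn hφ hpres t (Or.inl rfl))
  obtain ⟨σ, hσ, hσs⟩ := exists_theta htn1 (by omega) hφ.1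
    (pres_iff ht htn hφ hpres (t + 1) (Or.inr rfl))
  -- every edge has exactly one preimage
  have hex : ∀ f : Sym2 (Fin n), ¬ f.IsDiag →
      ∃ g : Sym2 (Fin n), ∀ e, ¬ e.IsDiag → (ERel φ e f ↔ e = g) := by
    intro f hf
    induction f with | _ a b =>
    have hab : a ≠ b := by simpa using hf
    obtain ⟨S', hsub, -, hS'⟩ := Finset.exists_subsuperset_card_eq
      (Finset.subset_univ ({a, b} : Finset (Fin n))) (n := t + 1)
      (by rw [Finset.card_pair hab]; omega) (by simpa using htn1)
    obtain ⟨S, hS, rfl⟩ := hσs S' hS'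
    obtain ⟨ρ, -, -, h⟩ := exists_rho ht htn1 hφ hθ hs S _ hS hS' (hσ S hS).2
    exact ⟨_, h a (hsub (by simp)) b (hsub (by simp)) hab⟩
  -- local inverse for triples
  have htri : ∀ i j k : Fin n, i ≠ j → i ≠ k → j ≠ k → ∃ a b c : Fin n, a ≠ b ∧ a ≠ c ∧ b ≠ c ∧
      ERel φ s(i, j) s(a, b) ∧ ERel φ s(i, k) s(a, c) := by
    intro i j k hij hik hjk
    obtain ⟨S, hsub, -, hS⟩ := Finset.exists_subsuperset_card_eq
      (Finset.subset_univ ({i, j, k} : Finset (Fin n))) (n := t + 1)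
      (by
        have := Finset.card_le_three (a := i) (b := j) (c := k)
        omega) (by simpa using htn1)
    obtain ⟨hS', hP⟩ := hσ S hS
    obtain ⟨ρ, hinj, hmap, h⟩ := exists_rho ht htn1 hφ hθ hs S _ hS hS' hP
    have himg : (σ S).image ρ = S := by
      apply Finset.eq_of_subset_of_card_le
      · intro x hx
        obtain ⟨a, ha, rfl⟩ := Finset.mem_image.1 hx
        exact hmap a ha
      · rw [Finset.card_image_of_injOn hinj]; omega
    rw [← himg] at hsub
    obtain ⟨a, ha, rfl⟩ := Finset.mem_image.1 (hsub (by simp : i ∈ ({i, j, k} : Finset (Fin n))))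
    obtain ⟨b, hb, rfl⟩ := Finset.mem_image.1 (hsub (by simp : j ∈ ({_, j, k} : Finset (Fin n))))
    obtain ⟨c, hc, rfl⟩ := Finset.mem_image.1 (hsub (by simp : k ∈ ({_, _, k} : Finset (Fin n))))
    have hab : a ≠ b := fun h => hij (by rw [h])
    have hac : a ≠ c := fun h => hik (by rw [h])
    have hbc : b ≠ c := fun h => hjk (by rw [h])
    exact ⟨a, b, c, hab, hac, hbc, (h a ha b hb hab _ (by simpa using hij)).2 rfl,
      (h a ha c hc hac _ (by simpa using hik)).2 rfl⟩
  -- each edge has some image, unique by counting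
  have hpt : ∀ e : {e : Sym2 (Fin n) // ¬ e.IsDiag},
      ∃ f : {e : Sym2 (Fin n) // ¬ e.IsDiag}, ERel φ e.1 f.1 := by
    rintro ⟨e, he⟩
    induction e with | _ x y =>
    have hxy : x ≠ y := by simpa using he
    obtain ⟨z, hz⟩ : ∃ z, z ∉ ({x, y} : Finset (Fin n)) := by
      by_contra hcon
      push Not at hcon
      have h1 := Finset.card_le_card (fun z _ => hcon z : (Finset.univ : Finset (Fin n)) ⊆ _)
      rw [Finset.card_pair hxy] at h1
      simp at h1
      omega
    simp only [Finset.mem_insert, Finset.mem_singleton, not_or] at hz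
    obtain ⟨a, b, c, hab, -, -, h, -⟩ := htri x y z hxy (Ne.symm hz.1) (Ne.symm hz.2)
    exact ⟨⟨s(a, b), by simpa using hab⟩, h⟩
  choose F hF using hpt
  have hFinj : Function.Injective F := by
    intro e e' h
    obtain ⟨g, hg⟩ := hex (F e).1 (F e).2
    have h1 := (hg e.1 e.2).1 (hF e)
    have h2 := (hg e'.1 e'.2).1 (h ▸ hF e')
    exact Subtype.ext (h1.trans h2.symm)
  have hFsurj := Finite.surjective_of_injective hFinj
  have huniq : ∀ e f, ¬ e.IsDiag → ¬ f.IsDiag → ∀ he : ¬ e.IsDiag, ERel φ e f →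
      f = (F ⟨e, he⟩).1 := by
    intro e f _ hf he hef
    obtain ⟨e', he'⟩ := hFsurj ⟨f, hf⟩
    have hf' : f = (F e').1 := by rw [he']
    obtain ⟨g, hg⟩ := hex f hf
    have h1 := (hg e he).1 hef
    have h2 := (hg e'.1 e'.2).1 (hf' ▸ hF e')
    have : e' = ⟨e, he⟩ := Subtype.ext (h2.trans h1.symm)
    rw [hf', this]
  obtain ⟨a, b, c, hab, hac, hbc, h1, h2⟩ := htri i j k hij hik hjk
  have hset : ∀ x y : Fin n, x ≠ y → ∀ f, ERel φ s(x, y) f →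
      (φ (singleEdge x y)).edgeSet = {f} := by
    intro x y hxy f hf
    have he : ¬ (s(x, y)).IsDiag := by simpa using hxy
    ext f'
    rw [Set.mem_singleton_iff]
    constructor
    · intro h'
      have hd' := SimpleGraph.not_isDiag_of_mem_edgeSet _ h'
      have hd := SimpleGraph.not_isDiag_of_mem_edgeSet _ hf
      rw [huniq _ f' he hd' he h', huniq _ f he hd he hf]
    · rintro rfl
      exact hf
  refine ⟨s(a, b), s(a, c), ?_, ⟨a, by simp, by simp⟩, ?_⟩
  · intro h
    rw [Sym2.eq_iff] at h
    grind
  · rw [SimpleGraph.edgeSet_sup, hset i j hij _ h1, hset i k hik _ h2]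
    rfl
end

section
/- Let n, t be integers with 2 ≤ t ≤ n−1. Suppose φ: 𝒢_n → 𝒢_n is a complete linear map satisfying: for all G ∈ 𝒢_n, α(φ(G)) = t if and only if α(G) = t. Then for every i ∈ {1,...,n} there exists i' ∈ {1,...,n} such that φ(⋃_{j≠i} G_{ij}) = ⋃_{j≠i'} G_{i'j}; that is, φ maps the star consisting of all edges incident with i to the star consisting of all edges incident with i'. -/
/-- The star at `i`: the graph whose edges are all pairs `(i, j)` with `j ≠ i`. -/
def starGraph {V : Type*} (i : V) : SimpleGraph V :=
  SimpleGraph.fromEdgeSet {e | ∃ j : V, j ≠ i ∧ e = s(i, j)}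

section Helpers
open Finset

variable {V : Type*} [Fintype V] [DecidableEq V]

/-- `S` is independent in `G`. -/
def Ind (G : SimpleGraph V) (S : Finset V) : Prop := ∀ a ∈ S, ∀ b ∈ S, a ≠ b → ¬ G.Adj a b

/-- Clique graph on `E`. -/
def ed (E : Finset V) : SimpleGraph V where
  Adj a b := a ≠ b ∧ a ∈ E ∧ b ∈ E
  symm := ⟨fun _ _ h => ⟨h.1.symm, h.2.2, h.2.1⟩⟩
  loopless := ⟨fun _ h => h.1 rfl⟩

/-- Complement of the clique graph on `S`. -/
def MS (S : Finset V) : SimpleGraph V where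
  Adj a b := a ≠ b ∧ ¬ (a ∈ S ∧ b ∈ S)
  symm := ⟨fun _ _ h => ⟨h.1.symm, fun h' => h.2 ⟨h'.2, h'.1⟩⟩⟩
  loopless := ⟨fun _ h => h.1 rfl⟩

lemma ind_mono {G H : SimpleGraph V} (h : G ≤ H) {S : Finset V} (hS : Ind H S) : Ind G S :=
  fun a ha b hb hab hadj => hS a ha b hb hab (h hadj)

lemma ind_sup {G H : SimpleGraph V} {S : Finset V} : Ind (G ⊔ H) S ↔ Ind G S ∧ Ind H S := by
  refine ⟨fun h => ⟨ind_mono le_sup_left h, ind_mono le_sup_right h⟩, ?_⟩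
  rintro ⟨h1, h2⟩ a ha b hb hab h
  rcases h with h | h
  · exact h1 a ha b hb hab h
  · exact h2 a ha b hb hab h

lemma le_MS {G : SimpleGraph V} {S : Finset V} (h : Ind G S) : G ≤ MS S :=
  fun a b hab => ⟨hab.ne, fun h' => h a h'.1 b h'.2 hab.ne hab⟩

lemma ind_MS (S : Finset V) : Ind (MS S) S := fun _ ha _ hb _ h => h.2 ⟨ha, hb⟩

lemma subset_of_ind_MS {S T : Finset V} (hT : 2 ≤ T.card) (h : Ind (MS S) T) : T ⊆ S := by
  intro x hx
  by_contra hxS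
  obtain ⟨y, hy, hyx⟩ := Finset.exists_mem_ne (by omega : 1 < T.card) x
  exact h x hx y hy hyx.symm ⟨hyx.symm, fun h' => hxS h'.1⟩

lemma not_ind_ed {E S : Finset V} (hE : E.card = 2) : ¬ Ind (ed E) S ↔ E ⊆ S := by
  obtain ⟨a, b, hab, rfl⟩ := Finset.card_eq_two.1 hE
  constructor
  · intro h
    by_contra hs
    apply h
    intro x hx y hy hxy hadj
    apply hs
    have h1 := hadj.2.1
    have h2 := hadj.2.2
    simp only [mem_insert, mem_singleton] at h1 h2
    intro z hz
    simp only [mem_insert, mem_singleton] at hz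
    grind
  · intro h h'
    exact h' a (h (by simp)) b (h (by simp)) hab ⟨hab, by simp, by simp⟩

lemma le_indepNum {G : SimpleGraph V} {k : ℕ} :
    k ≤ indepNum G ↔ ∃ S : Finset V, S.card = k ∧ Ind G S := by
  have hb : BddAbove {k | ∃ s : Finset V, (∀ a ∈ s, ∀ b ∈ s, a ≠ b → ¬ G.Adj a b) ∧ s.card = k} :=
    ⟨Fintype.card V, by rintro k ⟨s, -, rfl⟩; exact Finset.card_le_univ s⟩
  constructor
  · intro h
    have hne : {k | ∃ s : Finset V, (∀ a ∈ s, ∀ b ∈ s, a ≠ b → ¬ G.Adj a b) ∧ s.card = k}.Nonempty :=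
      ⟨0, ∅, by simp, rfl⟩
    obtain ⟨s, hs, hc⟩ := Nat.sSup_mem hne hb
    have : k ≤ s.card := by rw [hc]; exact h
    obtain ⟨u, hu, huc⟩ := Finset.exists_subset_card_eq this
    exact ⟨u, huc, fun a ha b hb => hs a (hu ha) b (hu hb)⟩
  · rintro ⟨S, hc, hS⟩
    exact le_csSup hb ⟨S, hS, hc⟩

lemma indepNum_anti {G H : SimpleGraph V} (h : G ≤ H) : indepNum H ≤ indepNum G := by
  obtain ⟨S, hc, hS⟩ := le_indepNum.1 (le_refl (indepNum H))
  exact le_indepNum.2 ⟨S, hc, ind_mono h hS⟩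

lemma interp {G H : SimpleGraph V} (hGH : G ≤ H) {t : ℕ} (h1 : indepNum H ≤ t)
    (h2 : t ≤ indepNum G) : ∃ K, G ≤ K ∧ K ≤ H ∧ indepNum K = t := by
  obtain ⟨K, hK⟩ := (Set.toFinite {K : SimpleGraph V | G ≤ K ∧ K ≤ H ∧ t ≤ indepNum K}).exists_maximal
    ⟨G, le_refl _, hGH, h2⟩
  obtain ⟨⟨a1, a2, a3⟩, hmax⟩ := hK
  refine ⟨K, a1, a2, ?_⟩
  by_contra hne
  have hlt : t + 1 ≤ indepNum K := by omega
  have hKH : ¬ H ≤ K := fun h => by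
    have := indepNum_anti h
    omega
  have : ∃ a b, H.Adj a b ∧ ¬ K.Adj a b := by
    by_contra hcon
    push Not at hcon
    exact hKH fun a b hab => hcon a b hab
  obtain ⟨a, b, hab, hnab⟩ := this
  have hle : K ⊔ ed {a, b} ≤ H := by
    refine sup_le a2 ?_
    rintro x y ⟨hxy, hx, hy⟩
    simp only [mem_insert, mem_singleton] at hx hy
    rcases hx with rfl | rfl <;> rcases hy with rfl | rfl
    · exact absurd rfl hxy
    · exact hab
    · exact hab.symm
    · exact absurd rfl hxy
  obtain ⟨S, hc, hS⟩ := le_indepNum.1 hlt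
  have hmem : t ≤ indepNum (K ⊔ ed {a, b}) := by
    have : Ind (K ⊔ ed {a, b}) (S.erase a) := by
      rw [ind_sup]
      refine ⟨fun x hx y hy => hS x (mem_of_mem_erase hx) y (mem_of_mem_erase hy), ?_⟩
      rintro x hx y hy hxy ⟨-, h1, h2⟩
      simp only [mem_insert, mem_singleton, mem_erase] at *
      grind
    have h3 := le_indepNum.2 ⟨_, rfl, this⟩
    have := Finset.pred_card_le_card_erase (s := S) (a := a)
    omega
  have := hmax ⟨a1.trans le_sup_left, hle, hmem⟩ le_sup_left
  exact hnab (this (Or.inr ⟨hab.ne, by simp, by simp⟩))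

/-- Level-k preservation. -/
def Pk (φ : SimpleGraph V → SimpleGraph V) (k : ℕ) : Prop :=
  ∀ G, (∃ S : Finset V, S.card = k ∧ Ind G S) ↔ ∃ S : Finset V, S.card = k ∧ Ind (φ G) S

lemma phi_mono_s11 {φ : SimpleGraph V → SimpleGraph V} (hφ : IsLinearMap' φ) {G H : SimpleGraph V}
    (h : G ≤ H) : φ G ≤ φ H := by
  have := hφ G H
  rw [sup_eq_right.2 h] at this
  rw [this]; exact le_sup_left

lemma Pk_of {φ : SimpleGraph V → SimpleGraph V} (hφ : IsLinearMap' φ) {t : ℕ} (ht : 2 ≤ t)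
    (htn : t + 1 ≤ Fintype.card V)
    (hp : ∀ G, indepNum (φ G) = t ↔ indepNum G = t) : Pk φ t ∧ Pk φ (t + 1) := by
  have htop : indepNum (⊤ : SimpleGraph V) ≤ t := by
    by_contra h
    push Not at h
    obtain ⟨S, hc, hS⟩ := le_indepNum.1 h
    obtain ⟨a, ha, b, hb, hab⟩ := Finset.one_lt_card.1 (by omega : 1 < S.card)
    exact hS a ha b hb hab hab
  have hbot : t ≤ indepNum (⊥ : SimpleGraph V) := by
    have : Fintype.card V ≤ indepNum (⊥ : SimpleGraph V) :=
      le_indepNum.2 ⟨univ, rfl, fun a _ b _ _ h => h⟩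
    omega
  have hgt : ∀ G, t < indepNum G → t < indepNum (φ G) := by
    intro G hG
    obtain ⟨K, h1, -, h3⟩ := interp (le_top : G ≤ ⊤) htop hG.le
    have h4 := (hp K).2 h3
    have h5 := indepNum_anti (phi_mono_s11 hφ h1)
    have h6 : indepNum (φ G) ≠ t := fun h => by have := (hp G).1 h; omega
    omega
  have hlt : ∀ G, indepNum G < t → indepNum (φ G) < t := by
    intro G hG
    obtain ⟨K, -, h1, h3⟩ := interp (bot_le : ⊥ ≤ G) hG.le hbot
    have h4 := (hp K).2 h3
    have h5 := indepNum_anti (phi_mono_s11 hφ h1)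
    have h6 : indepNum (φ G) ≠ t := fun h => by have := (hp G).1 h; omega
    omega
  constructor <;> intro G <;> rw [← le_indepNum, ← le_indepNum] <;>
    rcases lt_trichotomy (indepNum G) t with h | h | h
  · have := hlt G h; omega
  · have := (hp G).2 h; omega
  · have := hgt G h; omega
  · have := hlt G h; omega
  · have := (hp G).2 h; omega
  · have := hgt G h; omega

lemma level {φ : SimpleGraph V → SimpleGraph V} (hφ : IsLinearMap' φ) {k : ℕ} (hk : 2 ≤ k)
    (hP : Pk φ k) : ∃ f : Equiv.Perm {S : Finset V // S.card = k},
      ∀ G S, Ind G S.1 ↔ Ind (φ G) (f S).1 := by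
  have h1 : ∀ S : {S : Finset V // S.card = k}, ∃ S' : {S : Finset V // S.card = k},
      Ind (φ (MS S.1)) S'.1 := by
    intro S
    obtain ⟨S', hc, h⟩ := (hP (MS S.1)).1 ⟨S.1, S.2, ind_MS _⟩
    exact ⟨⟨S', hc⟩, h⟩
  choose f hf using h1
  have hiff : ∀ G S, Ind G S.1 ↔ Ind (φ G) (f S).1 := by
    intro G S
    refine ⟨fun h => ind_mono (phi_mono_s11 hφ (le_MS h)) (hf S), fun h => ?_⟩
    have : Ind (φ (G ⊔ MS S.1)) (f S).1 := by
      rw [hφ, ind_sup]; exact ⟨h, hf S⟩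
    obtain ⟨T, hc, hT⟩ := (hP _).2 ⟨_, (f S).2, this⟩
    rw [ind_sup] at hT
    have h2 := subset_of_ind_MS (by omega) hT.2
    have h3 : T = S.1 := Finset.eq_of_subset_of_card_le h2 (by rw [hc, S.2])
    rw [← h3]; exact hT.1
  have hinj : Function.Injective f := by
    intro S T hST
    have h2 : Ind (φ (MS S.1)) (f T).1 := by rw [← hST]; exact hf S
    have h3 := subset_of_ind_MS (by rw [T.2]; omega) ((hiff _ _).2 h2)
    exact Subtype.ext (Finset.eq_of_subset_of_card_le h3 (by rw [S.2, T.2])).symm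
  exact ⟨Equiv.ofBijective f (Finite.injective_iff_bijective.1 hinj), hiff⟩

lemma sep {k : ℕ} (hkn : k + 1 ≤ Fintype.card V) {A : Finset V} (hA : A.card ≤ k) {x : V}
    (hx : x ∉ A) : ∃ S : {S : Finset V // S.card = k}, A ⊆ S.1 ∧ x ∉ S.1 := by
  have h1 : A ⊆ univ.erase x := fun y hy => by
    simp only [mem_erase, mem_univ, and_true]; rintro rfl; exact hx hy
  obtain ⟨S, h2, h3, h4⟩ := Finset.exists_subsuperset_card_eq h1 hA
    (by rw [Finset.card_erase_of_mem (mem_univ _), Finset.card_univ]; omega)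
  exact ⟨⟨S, h4⟩, h2, fun h => by simpa using h3 h⟩

lemma count_le {k : ℕ} {E E' : Finset V} (hE : E.card = E'.card) :
    Nat.card {S : {S : Finset V // S.card = k} // E ⊆ S.1} ≤
    Nat.card {S : {S : Finset V // S.card = k} // E' ⊆ S.1} := by
  classical
  let π : Equiv.Perm V := (Finset.equivOfCardEq hE).extendSubtype
  have hπ : E.map π.toEmbedding = E' := by
    apply Finset.eq_of_subset_of_card_le
    · intro x hx
      obtain ⟨y, hy, rfl⟩ := Finset.mem_map.1 hx
      exact Equiv.extendSubtype_mem (Finset.equivOfCardEq hE) y hy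
    · simp [hE]
  refine Nat.card_le_card_of_injective
    (fun S => ⟨⟨S.1.1.map π.toEmbedding, by rw [Finset.card_map]; exact S.1.2⟩, ?_⟩) ?_
  · rw [← hπ]; exact Finset.map_subset_map.2 S.2
  · intro S T h
    simp only [Subtype.mk.injEq, Finset.map_inj] at h
    exact Subtype.ext (Subtype.ext h)

lemma count_phi {φ : SimpleGraph V → SimpleGraph V} {k : ℕ}
    (f : Equiv.Perm {S : Finset V // S.card = k})
    (hf : ∀ G S, Ind G S.1 ↔ Ind (φ G) (f S).1) (G : SimpleGraph V) :
    Nat.card {S : {S : Finset V // S.card = k} // ¬ Ind (φ G) S.1} =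
    Nat.card {S : {S : Finset V // S.card = k} // ¬ Ind G S.1} :=
  (Nat.card_congr (f.subtypeEquiv fun S => not_congr (hf G S))).symm

lemma ed_le {G : SimpleGraph V} {a b : V} (hab : G.Adj a b) : ed {a, b} ≤ G := by
  rintro x y ⟨hxy, hx, hy⟩
  simp only [mem_insert, mem_singleton] at hx hy
  rcases hx with rfl | rfl <;> rcases hy with rfl | rfl
  · exact absurd rfl hxy
  · exact hab
  · exact hab.symm
  · exact absurd rfl hxy

lemma single {φ : SimpleGraph V → SimpleGraph V} {k : ℕ} (hk : 2 ≤ k)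
    (hkn : k + 1 ≤ Fintype.card V)
    (f : Equiv.Perm {S : Finset V // S.card = k})
    (hf : ∀ G S, Ind G S.1 ↔ Ind (φ G) (f S).1) {E : Finset V} (hE : E.card = 2) :
    ∃ E' : Finset V, E'.card = 2 ∧ φ (ed E) = ed E' := by
  obtain ⟨S, hES, -, hS⟩ := Finset.exists_subsuperset_card_eq (subset_univ E)
    (by omega : E.card ≤ k) (by rw [Finset.card_univ]; omega)
  have h1 : ¬ Ind (φ (ed E)) (f ⟨S, hS⟩).1 := by
    rw [← hf]; exact (not_ind_ed hE).2 hES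
  have : ∃ a b, (φ (ed E)).Adj a b := by
    by_contra hcon
    push Not at hcon
    exact h1 fun a _ b _ _ => hcon a b
  obtain ⟨a, b, hab⟩ := this
  have hE' : ({a, b} : Finset V).card = 2 := Finset.card_pair hab.ne
  refine ⟨{a, b}, hE', le_antisymm ?_ (ed_le hab)⟩
  have hset : {S : {S : Finset V // S.card = k} | ({a, b} : Finset V) ⊆ S.1} =
      {S : {S : Finset V // S.card = k} | ¬ Ind (φ (ed E)) S.1} := by
    apply Set.eq_of_subset_of_ncard_le
    · intro S hS
      rw [Set.mem_setOf_eq, ← not_ind_ed hE'] at hS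
      exact fun h => hS (ind_mono (ed_le hab) h)
    · change Nat.card {S : {S : Finset V // S.card = k} // ¬ Ind (φ (ed E)) S.1} ≤
        Nat.card {S : {S : Finset V // S.card = k} // ({a, b} : Finset V) ⊆ S.1}
      rw [count_phi f hf]
      simp only [not_ind_ed hE]
      exact count_le (hE.trans hE'.symm)
    · exact Set.toFinite _
  intro c d hcd
  have key : ∀ x ∈ ({a, b} : Finset V), x ∈ ({c, d} : Finset V) := by
    intro x hx
    by_contra hx'
    obtain ⟨S, hS1, hS2⟩ := sep hkn (by rw [Finset.card_pair hcd.ne]; exact hk) hx'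
    have : S ∈ {S : {S : Finset V // S.card = k} | ¬ Ind (φ (ed E)) S.1} :=
      fun h => h c (hS1 (by simp)) d (hS1 (by simp)) hcd.ne hcd
    rw [← hset] at this
    exact hS2 (this hx)
  have : ({a, b} : Finset V) = {c, d} := Finset.eq_of_subset_of_card_le key
    (by rw [hE', Finset.card_pair hcd.ne])
  rw [this]
  exact ⟨hcd.ne, by simp, by simp⟩

/-- Everything we need about the edge permutation. -/
lemma edge_perm {φ : SimpleGraph V → SimpleGraph V} (hφ : IsLinearMap' φ) {t : ℕ} (ht : 2 ≤ t)
    (htn : t + 1 ≤ Fintype.card V) (hP : Pk φ t) (hP' : Pk φ (t + 1)) :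
    ∃ ψ : Finset V → Finset V, (∀ E, E.card = 2 → (ψ E).card = 2 ∧ φ (ed E) = ed (ψ E)) ∧
      (∀ E F, E.card = 2 → F.card = 2 → ψ E = ψ F → E = F) ∧
      (∀ A B C T : Finset V, A.card = 2 → B.card = 2 → C.card = 2 → A ≠ B → A ≠ C → B ≠ C →
        T.card = 3 → A ⊆ T → B ⊆ T → C ⊆ T →
        ∃ T' : Finset V, T'.card ≤ 3 ∧ ψ A ⊆ T' ∧ ψ B ⊆ T' ∧ ψ C ⊆ T') := by
  obtain ⟨f, hf⟩ := level hφ ht hP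
  have h1 : ∀ E : Finset V, ∃ E' : Finset V, E.card = 2 → E'.card = 2 ∧ φ (ed E) = ed E' := by
    intro E
    by_cases hE : E.card = 2
    · obtain ⟨E', h⟩ := single ht htn f hf hE
      exact ⟨E', fun _ => h⟩
    · exact ⟨∅, fun h => absurd h hE⟩
  choose ψ hψ using h1
  have hsub : ∀ E, E.card = 2 → ∀ S : {S : Finset V // S.card = t},
      (E ⊆ S.1 ↔ ψ E ⊆ (f S).1) := by
    intro E hE S
    rw [← not_ind_ed hE, ← not_ind_ed (hψ E hE).1, ← (hψ E hE).2, hf]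
  have hinj : ∀ E F, E.card = 2 → F.card = 2 → ψ E = ψ F → E = F := by
    intro E F hE hF h
    refine Finset.eq_of_subset_of_card_le ?_ (by rw [hE, hF])
    intro x hx
    by_contra hx'
    obtain ⟨S, hS1, hS2⟩ := sep htn (by omega) hx'
    rw [hsub F hF, ← h, ← hsub E hE] at hS1
    exact hS2 (hS1 hx)
  refine ⟨ψ, hψ, hinj, ?_⟩
  intro A B C T hA hB hC hAB hAC hBC hT hAT hBT hCT
  by_cases ht2 : t = 2
  · subst ht2
    obtain ⟨g, hg⟩ := level hφ (by norm_num) hP'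
    have hsub' : ∀ E, E.card = 2 → ∀ S : {S : Finset V // S.card = 2 + 1},
        (E ⊆ S.1 ↔ ψ E ⊆ (g S).1) := by
      intro E hE S
      rw [← not_ind_ed hE, ← not_ind_ed (hψ E hE).1, ← (hψ E hE).2, hg]
    exact ⟨(g ⟨T, hT⟩).1, (g ⟨T, hT⟩).2.le, (hsub' A hA ⟨T, hT⟩).1 hAT,
      (hsub' B hB ⟨T, hT⟩).1 hBT, (hsub' C hC ⟨T, hT⟩).1 hCT⟩
  · obtain ⟨S, hTS, -, hS⟩ := Finset.exists_subsuperset_card_eq (subset_univ T)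
      (by omega : T.card ≤ t) (by rw [Finset.card_univ]; omega)
    have gen : ∀ A B C : Finset V, A.card = 2 → B.card = 2 → C.card = 2 → A ≠ B →
        A ⊆ T → B ⊆ T → C ⊆ T → ψ C ⊆ ψ A ∪ ψ B := by
      intro A B C hA hB hC hAB hAT hBT hCT x hx
      by_contra hx'
      have hu : ψ A ∪ ψ B ⊆ (f ⟨S, hS⟩).1 :=
        union_subset ((hsub A hA _).1 (hAT.trans hTS)) ((hsub B hB _).1 (hBT.trans hTS))
      have hcard : (ψ A ∪ ψ B).card ≤ t := by
        rw [← (f ⟨S, hS⟩).2]; exact Finset.card_le_card hu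
      obtain ⟨R, hR1, hR2⟩ := sep htn hcard hx'
      obtain ⟨Q, rfl⟩ := f.surjective R
      have hAQ := (hsub A hA Q).2 (subset_union_left.trans hR1)
      have hBQ := (hsub B hB Q).2 (subset_union_right.trans hR1)
      have hABT : A ∪ B = T := by
        refine Finset.eq_of_subset_of_card_le (union_subset hAT hBT) ?_
        by_contra hlt
        have e1 : A = A ∪ B := Finset.eq_of_subset_of_card_le subset_union_left (by omega)
        have e2 : B = A ∪ B := Finset.eq_of_subset_of_card_le subset_union_right (by omega)
        exact hAB (e1.trans e2.symm)
      have hCQ : C ⊆ Q.1 := by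
        rw [← hABT] at hCT
        exact hCT.trans (union_subset hAQ hBQ)
      exact hR2 ((hsub C hC Q).1 hCQ hx)
    have g1 := gen A B C hA hB hC hAB hAT hBT hCT
    have g2 := gen B C A hB hC hA hBC hBT hCT hAT
    refine ⟨ψ A ∪ ψ B, ?_, subset_union_left, subset_union_right, g1⟩
    by_contra hlt
    have c1 := Finset.card_union_add_card_inter (ψ A) (ψ B)
    rw [(hψ A hA).1, (hψ B hB).1] at c1
    have hempty : ψ A ∩ ψ B = ∅ := by
      rw [← Finset.card_eq_zero]; omega
    have hsubC : ψ A ⊆ ψ C := by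
      intro x hx
      rcases mem_union.1 (g2 hx) with h | h
      · have : x ∈ ψ A ∩ ψ B := mem_inter.2 ⟨hx, h⟩
        rw [hempty] at this
        simp at this
      · exact h
    exact hAC (hinj A C hA hC (Finset.eq_of_subset_of_card_le hsubC
      (by rw [(hψ A hA).1, (hψ C hC).1])))

/-- two-sets inside a small set, combinatorial core -/
lemma core {P Q R L T X Y : Finset V} (hP : P.card = 2) (hQ : Q.card = 2) (hR : R.card = 2)
    (hL : L.card = 2) (hPQ : P ≠ Q) (hPR : P ≠ R) (hQR : Q ≠ R) (hLP : L ≠ P) (hLQ : L ≠ Q)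
    (hT : T.card ≤ 3) (hPT : P ⊆ T) (hQT : Q ⊆ T) (hRT : R ⊆ T)
    (hX : X.card ≤ 3) (hLX : L ⊆ X) (hPX : P ⊆ X)
    (hY : Y.card ≤ 3) (hLY : L ⊆ Y) (hQY : Q ⊆ Y) {v : V} (hvP : v ∈ P) (hvQ : v ∈ Q)
    (hvL : v ∉ L) : L = R := by
  have meet : ∀ {A B Z : Finset V}, A.card = 2 → B.card = 2 → Z.card ≤ 3 → A ⊆ Z → B ⊆ Z →
      ∃ x, x ∈ A ∧ x ∈ B := by
    intro A B Z hA hB hZ hAZ hBZ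
    have c1 := Finset.card_union_add_card_inter A B
    have c2 := Finset.card_le_card (union_subset hAZ hBZ)
    have : 0 < (A ∩ B).card := by omega
    obtain ⟨x, hx⟩ := Finset.card_pos.1 this
    exact ⟨x, mem_inter.1 hx⟩
  have pair : ∀ {A : Finset V} {x y : V}, A.card = 2 → x ∈ A → y ∈ A → x ≠ y → A = {x, y} := by
    intro A x y hA hx hy hxy
    refine (Finset.eq_of_subset_of_card_le ?_ (by rw [hA, Finset.card_pair hxy])).symm
    intro z hz
    simp only [mem_insert, mem_singleton] at hz
    rcases hz with rfl | rfl <;> assumption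
  obtain ⟨a, haL, haP⟩ := meet hL hP hX hLX hPX
  obtain ⟨b, hbL, hbQ⟩ := meet hL hQ hY hLY hQY
  have hav : v ≠ a := by rintro rfl; exact hvL haL
  have hbv : v ≠ b := by rintro rfl; exact hvL hbL
  have eP := pair hP hvP haP hav
  have eQ := pair hQ hvQ hbQ hbv
  have hab : a ≠ b := by rintro rfl; exact hPQ (eP.trans eQ.symm)
  have eL := pair hL haL hbL hab
  have hPQT : P ∪ Q = T := by
    refine Finset.eq_of_subset_of_card_le (union_subset hPT hQT) ?_
    by_contra hlt
    have e1 : P = P ∪ Q := Finset.eq_of_subset_of_card_le subset_union_left (by omega)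
    have e2 : Q = P ∪ Q := Finset.eq_of_subset_of_card_le subset_union_right (by omega)
    exact hPQ (e1.trans e2.symm)
  have hvR : v ∉ R := by
    intro hvR
    obtain ⟨w, hw, hwv⟩ := Finset.exists_mem_ne (by omega : 1 < R.card) v
    have eR := pair hR hvR hw hwv.symm
    have : w ∈ P ∪ Q := by rw [hPQT]; exact hRT hw
    rw [eP, eQ] at this
    simp only [mem_union, mem_insert, mem_singleton] at this
    have h3 : w = a ∨ w = b := by tauto
    rcases h3 with rfl | rfl
    · exact hPR (eP.trans eR.symm)
    · exact hQR (eQ.trans eR.symm)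
  refine (Finset.eq_of_subset_of_card_le ?_ (by rw [hL, hR])).symm
  intro w hw
  have hwv : w ≠ v := by rintro rfl; exact hvR hw
  have : w ∈ P ∪ Q := by rw [hPQT]; exact hRT hw
  rw [eP, eQ] at this
  simp only [mem_union, mem_insert, mem_singleton] at this
  rw [eL]
  simp only [mem_insert, mem_singleton]
  tauto

lemma pair_ne {i j k : V} (hjk : j ≠ k) : ({i, j} : Finset V) ≠ {i, k} := by
  intro h
  have h1 : j ∈ ({i, k} : Finset V) := by rw [← h]; simp
  have h2 : k ∈ ({i, j} : Finset V) := by rw [h]; simp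
  simp only [mem_insert, mem_singleton] at h1 h2
  grind

lemma final {φ : SimpleGraph V → SimpleGraph V} (hφ : IsLinearMap' φ)
    (hn : 3 ≤ Fintype.card V)
    (ψ : Finset V → Finset V) (hψ : ∀ E, E.card = 2 → (ψ E).card = 2 ∧ φ (ed E) = ed (ψ E))
    (hinj : ∀ E F, E.card = 2 → F.card = 2 → ψ E = ψ F → E = F)
    (htri : ∀ A B C T : Finset V, A.card = 2 → B.card = 2 → C.card = 2 → A ≠ B → A ≠ C → B ≠ C →
        T.card = 3 → A ⊆ T → B ⊆ T → C ⊆ T →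
        ∃ T' : Finset V, T'.card ≤ 3 ∧ ψ A ⊆ T' ∧ ψ B ⊆ T' ∧ ψ C ⊆ T') (i : V) :
    ∃ v, φ (starGraph i) = starGraph v := by
  have tri : ∀ j k, j ≠ i → k ≠ i → j ≠ k →
      ∃ T' : Finset V, T'.card ≤ 3 ∧ ψ {i, j} ⊆ T' ∧ ψ {i, k} ⊆ T' ∧ ψ {j, k} ⊆ T' := by
    intro j k hj hk hjk
    refine htri _ _ _ {i, j, k} (Finset.card_pair hj.symm) (Finset.card_pair hk.symm)
      (Finset.card_pair hjk) (pair_ne hjk) ?_ ?_ ?_ ?_ ?_ ?_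
    · rw [Finset.pair_comm]; exact pair_ne hk.symm
    · rw [Finset.pair_comm, Finset.pair_comm j]; exact pair_ne hj.symm
    · exact Finset.card_eq_three.2 ⟨i, j, k, hj.symm, hk.symm, hjk, rfl⟩
    all_goals
      intro x hx
      simp only [mem_insert, mem_singleton] at hx ⊢
      tauto
  have hcard : (univ.erase i).card = Fintype.card V - 1 := by
    rw [Finset.card_erase_of_mem (mem_univ _), Finset.card_univ]
  obtain ⟨j, hj, k, hk, hjk⟩ := Finset.one_lt_card.1 (by omega : 1 < (univ.erase i).card)
  replace hj := Finset.ne_of_mem_erase hj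
  replace hk := Finset.ne_of_mem_erase hk
  have c2 : ∀ l, l ≠ i → (ψ {i, l}).card = 2 := fun l hl => (hψ _ (Finset.card_pair hl.symm)).1
  have ne2 : ∀ l m, l ≠ i → m ≠ i → l ≠ m → ψ {i, l} ≠ ψ {i, m} := fun l m hl hm hlm h =>
    pair_ne hlm (hinj _ _ (Finset.card_pair hl.symm) (Finset.card_pair hm.symm) h)
  obtain ⟨T, hT, hjT, hkT, hjkT⟩ := tri j k hj hk hjk
  have : 0 < (ψ {i, j} ∩ ψ {i, k}).card := by
    have c1 := Finset.card_union_add_card_inter (ψ {i, j}) (ψ {i, k})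
    have c3 := Finset.card_le_card (union_subset hjT hkT)
    rw [c2 j hj, c2 k hk] at c1
    omega
  obtain ⟨v, hv⟩ := Finset.card_pos.1 this
  rw [mem_inter] at hv
  have hall : ∀ l, l ≠ i → v ∈ ψ {i, l} := by
    intro l hl
    by_cases hlj : l = j
    · rw [hlj]; exact hv.1
    by_cases hlk : l = k
    · rw [hlk]; exact hv.2
    by_contra hvl
    obtain ⟨X, hX, hX1, hX2, -⟩ := tri l j hl hj hlj
    obtain ⟨Y, hY, hY1, hY2, -⟩ := tri l k hl hk hlk
    have hjk2 := Finset.card_pair hjk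
    have e := core (c2 j hj) (c2 k hk) (hψ _ hjk2).1 (c2 l hl) (ne2 j k hj hk hjk)
      (fun h => by
        have := hinj _ _ (Finset.card_pair hj.symm) hjk2 h
        rw [Finset.pair_comm] at this
        exact pair_ne hk.symm this)
      (fun h => by
        have := hinj _ _ (Finset.card_pair hk.symm) hjk2 h
        rw [Finset.pair_comm, Finset.pair_comm j] at this
        exact pair_ne hj.symm this)
      (ne2 l j hl hj hlj) (ne2 l k hl hk hlk) hT hjT hkT hjkT hX hX1 hX2 hY hY1 hY2 hv.1 hv.2 hvl
    have e2 := hinj _ _ (Finset.card_pair hl.symm) hjk2 e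
    have : i ∈ ({j, k} : Finset V) := by rw [← e2]; simp
    simp only [mem_insert, mem_singleton] at this
    rcases this with h | h
    · exact hj h.symm
    · exact hk h.symm
  have himg : (univ.erase i).image (fun l => ψ {i, l}) =
      (univ.erase v).image (fun w => ({v, w} : Finset V)) := by
    apply Finset.eq_of_subset_of_card_le
    · intro F hF
      obtain ⟨l, hl, rfl⟩ := Finset.mem_image.1 hF
      have hl := Finset.ne_of_mem_erase hl
      obtain ⟨w, hw, hwv⟩ := Finset.exists_mem_ne (by rw [c2 l hl]; norm_num : 1 < (ψ {i, l}).card) v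
      refine Finset.mem_image.2 ⟨w, by simp [hwv], ?_⟩
      refine Finset.eq_of_subset_of_card_le ?_ (by rw [c2 l hl, Finset.card_pair hwv.symm])
      intro z hz
      simp only [mem_insert, mem_singleton] at hz
      rcases hz with rfl | rfl
      · exact hall l hl
      · exact hw
    · refine Finset.card_image_le.trans ?_
      rw [Finset.card_image_of_injOn, hcard, Finset.card_erase_of_mem (mem_univ _), Finset.card_univ]
      intro l hl m hm h
      by_contra hlm
      exact ne2 l m (Finset.ne_of_mem_erase hl) (Finset.ne_of_mem_erase hm) hlm h
  have hstar : ∀ u : V, starGraph u = (univ.erase u).sup (fun w => ed {u, w}) := by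
    intro u
    apply le_antisymm
    · intro a b hab
      obtain ⟨⟨w, hw, h⟩, hne⟩ := (SimpleGraph.fromEdgeSet_adj _).1 hab
      have hle : ed {u, w} ≤ (univ.erase u).sup (fun w => ed {u, w}) :=
        Finset.le_sup (f := fun w => ed ({u, w} : Finset V)) (by simp [hw])
      apply hle
      rcases Sym2.eq_iff.1 h with ⟨rfl, rfl⟩ | ⟨rfl, rfl⟩
      · exact ⟨hne, by simp, by simp⟩
      · exact ⟨hne, by simp, by simp⟩
    · refine Finset.sup_le fun w hw => ed_le ?_
      have hw := Finset.ne_of_mem_erase hw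
      exact (SimpleGraph.fromEdgeSet_adj _).2 ⟨⟨w, hw, rfl⟩, hw.symm⟩
  have hbot : φ ⊥ = ⊥ := by
    rw [eq_bot_iff]
    intro a b hab
    have m : ∀ l, l ≠ i → ψ {i, l} = {a, b} := by
      intro l hl
      have h1 : (φ (ed {i, l})).Adj a b := phi_mono_s11 hφ bot_le hab
      rw [(hψ _ (Finset.card_pair hl.symm)).2] at h1
      refine (Finset.eq_of_subset_of_card_le ?_ (by rw [c2 l hl, Finset.card_pair h1.1])).symm
      intro z hz
      simp only [mem_insert, mem_singleton] at hz
      rcases hz with rfl | rfl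
      · exact h1.2.1
      · exact h1.2.2
    exact absurd ((m j hj).trans (m k hk).symm) (ne2 j k hj hk hjk)
  refine ⟨v, ?_⟩
  rw [hstar i, hstar v, Finset.comp_sup_eq_sup_comp φ hφ hbot]
  have e1 : (univ.erase i).sup (φ ∘ fun w => ed {i, w}) =
      ((univ.erase i).image (fun l => ψ {i, l})).sup ed := by
    rw [Finset.sup_image]
    refine Finset.sup_congr rfl fun l hl => ?_
    exact (hψ _ (Finset.card_pair (Finset.ne_of_mem_erase hl).symm)).2
  rw [e1, himg, Finset.sup_image]
  rfl

end Helpers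

theorem stmt11 (n t : ℕ) (ht : 2 ≤ t) (htn : t ≤ n - 1)
    (φ : SimpleGraph (Fin n) → SimpleGraph (Fin n)) (hφ : IsCompleteLinearMap φ)
    (hpres : ∀ G : SimpleGraph (Fin n), indepNum (φ G) = t ↔ indepNum G = t) :
    ∀ i : Fin n, ∃ i' : Fin n, φ (starGraph i) = starGraph i' := by
  have hc : Fintype.card (Fin n) = n := Fintype.card_fin n
  obtain ⟨h1, h2⟩ := Pk_of hφ.1 ht (by omega) hpres
  obtain ⟨ψ, a, b, c⟩ := edge_perm hφ.1 ht (by omega) h1 h2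
  exact final hφ.1 (by omega) ψ a b c
end
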